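/- Let P = ½P₁ + ½P₂ be the mixed probability distribution on the boundary of the upper unit semicircular disc, where P₁ is uniform on the base and P₂ is uniform on the semicircular arc. Then the set {(−1/4 − 1/π, 1/π), (1/4 + 1/π, 1/π)} forms the optimal set of two-means for P, and the quantization error for two-means is V₂(P) = 2·((96 − 24π + 7π²)/(192π²) + (−96 − 8π + 17π²)/(64π²)). -/

import Mathlib

open MeasureTheory Real Filter
open scoped ENNReal

noncomputable section

/-- The plane `ℝ²` with the Euclidean norm. -/
abbrev E2 : Type := EuclideanSpace ℝ (Fin 2)

/-- The point `(a, b)` of `ℝ²`. -/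
def pt (a b : ℝ) : E2 := !₂[a, b]

/-- The `n`th quantization error of a Borel probability measure `P` on `ℝ²`:
the infimum of `∫ min_{a ∈ α} ‖x - a‖² dP(x)` over all (nonempty) finite sets
`α ⊆ ℝ²` with at most `n` elements. -/
def quantErr (P : Measure E2) (n : ℕ) : ℝ :=
  sInf {v : ℝ | ∃ α : Set E2, α.Finite ∧ α.Nonempty ∧ α.ncard ≤ n ∧
    v = ∫ x, sInf ((fun a => ‖x - a‖ ^ 2) '' α) ∂P}

/-- `α` is an optimal set of `n`-means for `P` if it attains the `n`th
quantization error. -/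
def IsOptimalSet (P : Measure E2) (n : ℕ) (α : Set E2) : Prop :=
  α.Finite ∧ α.Nonempty ∧ α.ncard ≤ n ∧
    (∫ x, sInf ((fun a => ‖x - a‖ ^ 2) '' α) ∂P) = quantErr P n

/-- The base `L₁ = {(t,0) : -1 ≤ t ≤ 1}` of the upper unit semicircular disc. -/
def baseL : Set E2 := segment ℝ (pt (-1) 0) (pt 1 0)

/-- The semicircular arc `L₂ = {(cos t, sin t) : 0 ≤ t ≤ π}`. -/
def semiArc : Set E2 :=
  {p | ∃ θ : ℝ, 0 ≤ θ ∧ θ ≤ Real.pi ∧ p = pt (Real.cos θ) (Real.sin θ)}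

/-- The mixed distribution `P = ½P₁ + ½P₂` on the boundary of the upper unit
semicircular disc, where `P₁` is uniform on the base `L₁` (density `1/2` w.r.t.
arc length) and `P₂` is uniform on the semicircular arc `L₂` (density `1/π`
w.r.t. arc length). -/
def semiP : Measure E2 :=
  (2 : ℝ≥0∞)⁻¹ • ((2 : ℝ≥0∞)⁻¹ • (μH[1] : Measure E2).restrict baseL) +
  (2 : ℝ≥0∞)⁻¹ • ((ENNReal.ofReal Real.pi)⁻¹ • (μH[1] : Measure E2).restrict semiArc)

lemma pt_norm_sq (a b : ℝ) : ‖pt a b‖ ^ 2 = a ^ 2 + b ^ 2 := by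
  simp [pt, EuclideanSpace.norm_sq_eq, Fin.sum_univ_two]

lemma pt_sub (a b c d : ℝ) : pt a b - pt c d = pt (a - c) (b - d) := by
  ext i; fin_cases i <;> simp [pt]

lemma pt_dist_sq (a b c d : ℝ) : dist (pt a b) (pt c d) ^ 2 = (a - c) ^ 2 + (b - d) ^ 2 := by
  rw [dist_eq_norm, pt_sub, pt_norm_sq]

lemma pt_continuous {f g : ℝ → ℝ} (hf : Continuous f) (hg : Continuous g) :
    Continuous (fun t => pt (f t) (g t)) := by
  unfold pt
  refine (PiLp.continuous_toLp 2 _).comp ?_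
  refine continuous_pi fun i => ?_
  fin_cases i
  · simpa using hf
  · simpa using hg

def gam (t : ℝ) : E2 := pt (Real.cos t) (Real.sin t)

lemma gam_continuous : Continuous gam := pt_continuous Real.continuous_cos Real.continuous_sin

lemma gam_dist_sq (s t : ℝ) : dist (gam s) (gam t) ^ 2 = (2 * Real.sin ((s - t) / 2)) ^ 2 := by
  unfold gam
  rw [pt_dist_sq]
  have h1 : Real.cos (s - t) = 1 - 2 * Real.sin ((s - t) / 2) ^ 2 := by
    have := Real.cos_sq' ((s - t) / 2)
    have h2 := Real.cos_two_mul ((s - t) / 2)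
    rw [show 2 * ((s - t) / 2) = s - t by ring] at h2
    linarith
  rw [Real.cos_sub] at h1
  nlinarith [Real.sin_sq_add_cos_sq s, Real.sin_sq_add_cos_sq t]

lemma gam_dist (s t : ℝ) : dist (gam s) (gam t) = 2 * |Real.sin ((s - t) / 2)| := by
  have := gam_dist_sq s t
  rw [sq_eq_sq_iff_abs_eq_abs, abs_of_nonneg dist_nonneg, abs_mul] at this
  simpa using this

lemma gam_lip : LipschitzWith 1 gam := by
  refine LipschitzWith.of_dist_le_mul fun s t => ?_
  rw [gam_dist, Real.dist_eq]
  have := Real.abs_sin_le_abs (x := (s - t) / 2)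
  rw [abs_div] at this
  simp at this ⊢
  linarith

lemma sin_lower (h x : ℝ) (h1 : h ≤ 1) (hx : |x| ≤ h) :
    |x| ≤ (1 + h) * (2 * |Real.sin (x / 2)|) := by
  wlog hx0 : 0 ≤ x generalizing x
  · have := this (-x) (by simpa using hx) (by linarith)
    rw [neg_div, Real.sin_neg] at this
    simpa using this
  rw [abs_of_nonneg hx0] at *
  rcases hx0.eq_or_lt with rfl | hx0
  · simp
  have := Real.sin_gt_sub_cube (x := x / 2) (by linarith)
  have h3 : x / 2 - (x / 2) ^ 3 / 6 ≤ |Real.sin (x / 2)| := this.le.trans (le_abs_self _)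
  have h4 : x ≤ (1 + h) * (2 * (x / 2 - (x / 2) ^ 3 / 6)) := by
    have : (1 + h) * (2 * (x / 2 - (x / 2) ^ 3 / 6)) - x = x * (h - (1 + h) * x ^ 2 / 24) := by ring
    have h5 : (1 + h) * x ^ 2 ≤ 2 * h := by
      have : x ^ 2 ≤ h := by nlinarith
      nlinarith
    have : 0 ≤ x * (h - (1 + h) * x ^ 2 / 24) := by
      apply mul_nonneg hx0.le; nlinarith
    linarith
  exact h4.trans (by gcongr; linarith)

def ang (p : E2) : ℝ := Real.arccos (p 0)

lemma ang_meas : Measurable ang := by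
  unfold ang
  apply Continuous.measurable
  fun_prop

lemma ang_gam (t : ℝ) (h0 : 0 ≤ t) (h1 : t ≤ Real.pi) : ang (gam t) = t := by
  simp [ang, gam, pt, Real.arccos_cos h0 h1]

lemma semiArc_eq : semiArc = gam '' Set.Icc 0 Real.pi := by
  ext p; simp only [semiArc, gam, Set.mem_ofPred_eq, Set.mem_image, Set.mem_Icc]
  constructor
  · rintro ⟨θ, a, b, rfl⟩; exact ⟨θ, ⟨a, b⟩, rfl⟩
  · rintro ⟨θ, ⟨a, b⟩, rfl⟩; exact ⟨θ, a, b, rfl⟩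

lemma semiArc_meas : MeasurableSet semiArc := by
  rw [semiArc_eq]
  exact (isCompact_Icc.image gam_continuous).measurableSet

lemma pre_eq (A : Set ℝ) : ang ⁻¹' A ∩ semiArc = gam '' (A ∩ Set.Icc 0 Real.pi) := by
  rw [semiArc_eq]
  ext p; constructor
  · rintro ⟨h, t, ht, rfl⟩
    refine ⟨t, ⟨?_, ht⟩, rfl⟩
    simpa [ang_gam t ht.1 ht.2] using h
  · rintro ⟨t, ⟨hA, ht⟩, rfl⟩
    exact ⟨by simpa [ang_gam t ht.1 ht.2] using hA, t, ht, rfl⟩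

def nu : Measure ℝ := ((μH[1] : Measure E2).restrict semiArc).map ang

lemma nu_apply {A : Set ℝ} (hA : MeasurableSet A) :
    nu A = μH[1] (gam '' (A ∩ Set.Icc 0 Real.pi)) := by
  rw [nu, Measure.map_apply ang_meas hA, Measure.restrict_apply (ang_meas hA), pre_eq]

lemma nu_le {A : Set ℝ} (hA : MeasurableSet A) :
    nu A ≤ volume.restrict (Set.Icc 0 Real.pi) A := by
  rw [nu_apply hA, Measure.restrict_apply hA]
  refine (gam_lip.hausdorffMeasure_image_le zero_le_one _).trans ?_
  simp [hausdorffMeasure_real]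

lemma nu_ge_local (h : ℝ) (h0 : 0 ≤ h) (h1 : h ≤ 1) {A : Set ℝ} (hA : MeasurableSet A)
    (hd : ∀ s ∈ A, ∀ t ∈ A, |s - t| ≤ h) :
    volume.restrict (Set.Icc 0 Real.pi) A ≤ ENNReal.ofReal (1 + h) * nu A := by
  rw [nu_apply hA, Measure.restrict_apply hA]
  have hl : LipschitzOnWith (Real.toNNReal (1 + h)) ang (gam '' (A ∩ Set.Icc 0 Real.pi)) := by
    refine LipschitzOnWith.of_dist_le_mul ?_
    rintro _ ⟨s, ⟨hs, hs'⟩, rfl⟩ _ ⟨t, ⟨ht, ht'⟩, rfl⟩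
    rw [ang_gam s hs'.1 hs'.2, ang_gam t ht'.1 ht'.2, gam_dist, Real.dist_eq,
      Real.coe_toNNReal _ (by linarith)]
    exact sin_lower h _ h1 (hd s hs t ht)
  have := hl.hausdorffMeasure_image_le zero_le_one
  have himg : ang '' (gam '' (A ∩ Set.Icc 0 Real.pi)) = A ∩ Set.Icc 0 Real.pi := by
    rw [Set.image_image]
    ext t; constructor
    · rintro ⟨s, hs, rfl⟩
      simpa [ang_gam s hs.2.1 hs.2.2] using hs
    · intro ht; exact ⟨t, ht, ang_gam t ht.2.1 ht.2.2⟩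
  rw [himg, hausdorffMeasure_real, ENNReal.rpow_one] at this
  exact this

lemma nu_ge_h (h : ℝ) (h0 : 0 < h) (h1 : h ≤ 1) {A : Set ℝ} (hA : MeasurableSet A) :
    volume.restrict (Set.Icc 0 Real.pi) A ≤ ENNReal.ofReal (1 + h) * nu A := by
  have hU : A = ⋃ n : ℤ, A ∩ Set.Ico (n • h) ((n + 1) • h) := by
    rw [← Set.inter_iUnion, iUnion_Ico_zsmul h0, Set.inter_univ]
  have hdis : Pairwise (Function.onFun Disjoint fun n : ℤ => A ∩ Set.Ico (n • h) ((n + 1) • h)) := by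
    intro i j hij
    exact ((Set.pairwise_disjoint_Ico_zsmul h) hij).mono Set.inter_subset_right Set.inter_subset_right
  have hm : ∀ n : ℤ, MeasurableSet (A ∩ Set.Ico (n • h) ((n + 1) • h)) :=
    fun n => hA.inter measurableSet_Ico
  rw [hU, measure_iUnion hdis hm, measure_iUnion hdis hm, ← ENNReal.tsum_mul_left]
  refine ENNReal.tsum_le_tsum fun n => nu_ge_local h h0.le h1 (hm n) ?_
  rintro s ⟨-, hs⟩ t ⟨-, ht⟩
  simp only [zsmul_eq_mul, Int.cast_add, Int.cast_one, Set.mem_Ico] at hs ht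
  rw [abs_le]; constructor <;> nlinarith

lemma nu_eq : nu = volume.restrict (Set.Icc 0 Real.pi) := by
  ext A hA
  refine le_antisymm (nu_le hA) ?_
  have ht : Tendsto (fun n : ℕ => ENNReal.ofReal (1 + 1 / ((n : ℝ) + 1)) * nu A) atTop
      (nhds (ENNReal.ofReal (1 + 0) * nu A)) := by
    refine ENNReal.Tendsto.mul_const ?_ (Or.inl (by simp))
    refine ENNReal.tendsto_ofReal ?_
    exact tendsto_const_nhds.add tendsto_one_div_add_atTop_nhds_zero_nat
  simp only [add_zero, ENNReal.ofReal_one, one_mul] at ht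
  refine ge_of_tendsto' ht fun n => nu_ge_h _ (by positivity) ?_ hA
  rw [div_le_one (by positivity)]
  have : (0 : ℝ) ≤ n := by positivity
  linarith

lemma arc_integral (f : E2 → ℝ) (hf : Continuous f) :
    Integrable f ((μH[1] : Measure E2).restrict semiArc) ∧
    ∫ x, f x ∂((μH[1] : Measure E2).restrict semiArc) = ∫ t in (0)..Real.pi, f (gam t) := by
  have hae : f =ᵐ[(μH[1] : Measure E2).restrict semiArc] fun x => f (gam (ang x)) := by
    refine (ae_restrict_iff' semiArc_meas).2 (Eventually.of_forall ?_)
    intro x hx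
    rw [semiArc_eq] at hx
    obtain ⟨t, ht, rfl⟩ := hx
    simp only [ang_gam t ht.1 ht.2]
  have hc : Continuous (fun t => f (gam t)) := hf.comp gam_continuous
  have hi : Integrable (fun t => f (gam t)) nu := by
    rw [nu_eq]
    exact hc.continuousOn.integrableOn_Icc
  constructor
  · refine Integrable.congr ?_ hae.symm
    exact hi.comp_measurable ang_meas
  · rw [integral_congr_ae hae, ← integral_map (f := fun t => f (gam t)) ang_meas.aemeasurable
      hc.aestronglyMeasurable]
    change ∫ t, f (gam t) ∂nu = _
    rw [nu_eq, integral_Icc_eq_integral_Ioc, intervalIntegral.integral_of_le Real.pi_pos.le]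

def bas (t : ℝ) : E2 := pt t 0

lemma bas_iso : Isometry bas := by
  refine Isometry.of_dist_eq fun s t => ?_
  have := pt_dist_sq s 0 t 0
  unfold bas
  rw [Real.dist_eq]
  simp only [sub_self, ne_eq, OfNat.ofNat_ne_zero, not_false_eq_true, zero_pow, add_zero] at this
  rw [sq_eq_sq_iff_abs_eq_abs, abs_of_nonneg dist_nonneg] at this
  exact this

lemma baseL_eq : baseL = bas '' Set.Icc (-1) 1 := by
  unfold baseL
  rw [segment_eq_image']
  ext p; constructor
  · rintro ⟨θ, hθ, rfl⟩
    refine ⟨-1 + θ * 2, ⟨by linarith [hθ.1], by linarith [hθ.2]⟩, ?_⟩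
    ext i; fin_cases i <;> simp [bas, pt]; norm_num
  · rintro ⟨t, ht, rfl⟩
    refine ⟨(t + 1) / 2, ⟨by linarith [ht.1], by linarith [ht.2]⟩, ?_⟩
    ext i; fin_cases i <;> simp [bas, pt]; ring

lemma base_measure : (μH[1] : Measure E2).restrict baseL =
    (volume.restrict (Set.Icc (-1) 1)).map bas := by
  ext A hA
  have hm := bas_iso.continuous.measurable
  rw [Measure.map_apply hm hA, Measure.restrict_apply hA, Measure.restrict_apply (hm hA),
    ← hausdorffMeasure_real, ← bas_iso.hausdorffMeasure_image (Or.inl zero_le_one), baseL_eq,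
    Set.image_preimage_inter]

lemma base_integral (f : E2 → ℝ) (hf : Continuous f) :
    Integrable f ((μH[1] : Measure E2).restrict baseL) ∧
    ∫ x, f x ∂((μH[1] : Measure E2).restrict baseL) = ∫ t in (-1)..1, f (pt t 0) := by
  have hm := bas_iso.continuous.measurable
  have hc : Continuous (fun t => f (bas t)) := hf.comp bas_iso.continuous
  rw [base_measure]
  constructor
  · rw [integrable_map_measure hf.aestronglyMeasurable hm.aemeasurable]
    exact hc.continuousOn.integrableOn_Icc
  · rw [integral_map hm.aemeasurable hf.aestronglyMeasurable,
      integral_Icc_eq_integral_Ioc, intervalIntegral.integral_of_le (by norm_num)]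
    rfl

lemma semiP_integral (f : E2 → ℝ) (hf : Continuous f) :
    ∫ x, f x ∂semiP = 1 / 4 * (∫ t in (-1)..1, f (pt t 0)) +
      1 / (2 * Real.pi) * ∫ t in (0)..Real.pi, f (pt (Real.cos t) (Real.sin t)) := by
  obtain ⟨i1, e1⟩ := base_integral f hf
  obtain ⟨i2, e2⟩ := arc_integral f hf
  have hpi : (ENNReal.ofReal Real.pi)⁻¹ ≠ ⊤ := by simp [Real.pi_pos]
  unfold semiP
  rw [integral_add_measure, integral_smul_measure, integral_smul_measure, integral_smul_measure,
    integral_smul_measure, e1, e2]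
  · simp only [ENNReal.toReal_inv, ENNReal.toReal_ofNat, smul_eq_mul,
      ENNReal.toReal_ofReal Real.pi_pos.le, gam]
    have := Real.pi_pos.ne'
    field_simp
    ring
  · exact (i1.smul_measure (by simp)).smul_measure (by simp)
  · exact (i2.smul_measure hpi).smul_measure (by simp)
def GG (c σ k : ℝ) : ℝ := 1 / 4 * (∫ t in (-1)..1, |c * t - k|) +
  1 / (2 * Real.pi) * ∫ t in (0)..Real.pi, |c * Real.cos t + σ * Real.sin t - k|

lemma int_arc_lin (c σ k : ℝ) :
    ∫ t in (0)..Real.pi, (c * Real.cos t + σ * Real.sin t - k) = 2 * σ - k * Real.pi := by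
  have : ∀ t ∈ Set.uIcc 0 Real.pi, HasDerivAt (fun t => c * Real.sin t - σ * Real.cos t - k * t)
      (c * Real.cos t + σ * Real.sin t - k) t := by
    intro t _
    have := (((Real.hasDerivAt_sin t).const_mul c).sub ((Real.hasDerivAt_cos t).const_mul σ)).sub
      ((hasDerivAt_id t).const_mul k)
    refine this.congr_deriv ?_
    ring
  rw [intervalIntegral.integral_eq_sub_of_hasDerivAt this
    (Continuous.intervalIntegrable (by fun_prop) _ _)]
  simp; ring

lemma int_arc_sq (c σ k : ℝ) :
    ∫ t in (0)..Real.pi, (c * Real.cos t + σ * Real.sin t - k) ^ 2 =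
      (c ^ 2 + σ ^ 2) * Real.pi / 2 - 4 * k * σ + k ^ 2 * Real.pi := by
  have : ∀ t ∈ Set.uIcc 0 Real.pi, HasDerivAt (fun t => (c ^ 2 - σ ^ 2) / 2 * (Real.sin t * Real.cos t)
      + (c ^ 2 + σ ^ 2) / 2 * t + c * σ * (Real.sin t * Real.sin t)
      - 2 * k * (c * Real.sin t - σ * Real.cos t) + k ^ 2 * t)
      ((c * Real.cos t + σ * Real.sin t - k) ^ 2) t := by
    intro t _
    have hs := Real.hasDerivAt_sin t
    have hc := Real.hasDerivAt_cos t
    have := (((((hs.mul hc).const_mul ((c ^ 2 - σ ^ 2) / 2)).add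
      ((hasDerivAt_id t).const_mul ((c ^ 2 + σ ^ 2) / 2))).add ((hs.mul hs).const_mul (c * σ))).sub
      (((hs.const_mul c).sub (hc.const_mul σ)).const_mul (2 * k))).add
      ((hasDerivAt_id t).const_mul (k ^ 2))
    refine this.congr_deriv ?_
    linear_combination -(c ^ 2 + σ ^ 2) / 2 * (Real.sin_sq_add_cos_sq t)
  rw [intervalIntegral.integral_eq_sub_of_hasDerivAt this
    (Continuous.intervalIntegrable (by fun_prop) _ _)]
  simp; ring

lemma int_base_lin (c k : ℝ) (a b : ℝ) :
    ∫ t in a..b, (c * t - k) = c * (b ^ 2 - a ^ 2) / 2 - k * (b - a) := by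
  rw [intervalIntegral.integral_sub (Continuous.intervalIntegrable (by fun_prop) _ _)
    (Continuous.intervalIntegrable (by fun_prop) _ _), intervalIntegral.integral_const_mul]
  simp; ring

lemma int_base_sq (c k : ℝ) : ∫ t in (-1)..1, (c * t - k) ^ 2 = 2 / 3 * c ^ 2 + 2 * k ^ 2 := by
  have : ∀ t ∈ Set.uIcc (-1 : ℝ) 1, HasDerivAt (fun t => c ^ 2 / 3 * t ^ 3 - c * k * t ^ 2 + k ^ 2 * t)
      ((c * t - k) ^ 2) t := by
    intro t _
    have := (((hasDerivAt_pow 3 t).const_mul (c ^ 2 / 3)).sub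
      ((hasDerivAt_pow 2 t).const_mul (c * k))).add ((hasDerivAt_id t).const_mul (k ^ 2))
    refine this.congr_deriv ?_
    norm_num; ring
  rw [intervalIntegral.integral_eq_sub_of_hasDerivAt this
    (Continuous.intervalIntegrable (by fun_prop) _ _)]
  ring

/-- Cauchy-Schwarz bound. -/
lemma GG_cs (c σ k : ℝ) : GG c σ k ^ 2 ≤
    5 / 12 * c ^ 2 + σ ^ 2 * (1 / 4 - (1 / Real.pi) ^ 2) + (k - σ / Real.pi) ^ 2 := by
  set r := GG c σ k with hr
  have hpi := Real.pi_pos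
  have h1 : ∫ t in (-1)..1, (2 * r * |c * t - k|) ≤ ∫ t in (-1)..1, ((c * t - k) ^ 2 + r ^ 2) := by
    refine intervalIntegral.integral_mono_on (by norm_num)
      (Continuous.intervalIntegrable (by fun_prop) _ _)
      (Continuous.intervalIntegrable (by fun_prop) _ _) fun t _ => ?_
    nlinarith [sq_nonneg (r - |c * t - k|), sq_abs (c * t - k)]
  have h2 : ∫ t in (0)..Real.pi, (2 * r * |c * Real.cos t + σ * Real.sin t - k|) ≤
      ∫ t in (0)..Real.pi, ((c * Real.cos t + σ * Real.sin t - k) ^ 2 + r ^ 2) := by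
    refine intervalIntegral.integral_mono_on hpi.le
      (Continuous.intervalIntegrable (by fun_prop) _ _)
      (Continuous.intervalIntegrable (by fun_prop) _ _) fun t _ => ?_
    nlinarith [sq_nonneg (r - |c * Real.cos t + σ * Real.sin t - k|),
      sq_abs (c * Real.cos t + σ * Real.sin t - k)]
  rw [intervalIntegral.integral_const_mul, intervalIntegral.integral_add
    (Continuous.intervalIntegrable (by fun_prop) _ _)
    (Continuous.intervalIntegrable (by fun_prop) _ _), int_base_sq] at h1
  rw [intervalIntegral.integral_const_mul, intervalIntegral.integral_add
    (Continuous.intervalIntegrable (by fun_prop) _ _)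
    (Continuous.intervalIntegrable (by fun_prop) _ _), int_arc_sq] at h2
  simp only [intervalIntegral.integral_const, smul_eq_mul] at h1 h2
  have h2' := mul_le_mul_of_nonneg_left h2 (show 0 ≤ 1 / (2 * Real.pi) by positivity)
  have e : 1 / (2 * Real.pi) * ((c ^ 2 + σ ^ 2) * Real.pi / 2 - 4 * k * σ + k ^ 2 * Real.pi +
      (Real.pi - 0) * r ^ 2) = (c ^ 2 + σ ^ 2) / 4 - 2 * k * σ / Real.pi + k ^ 2 / 2 + r ^ 2 / 2 := by
    field_simp; ring
  rw [e] at h2'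
  have hr2 : 2 * r * r = 1 / 4 * (2 * r * ∫ t in (-1)..1, |c * t - k|) + 1 / (2 * Real.pi) *
      (2 * r * ∫ t in (0)..Real.pi, |c * Real.cos t + σ * Real.sin t - k|) := by
    conv_lhs => rw [mul_assoc]; arg 2; arg 2; rw [hr]
    unfold GG; ring
  have e3 : (k - σ / Real.pi) ^ 2 = k ^ 2 - 2 * k * σ / Real.pi + σ ^ 2 * (1 / Real.pi) ^ 2 := by
    field_simp; ring
  rw [e3]
  nlinarith

lemma GG_neg (c σ k : ℝ) : GG (-c) (-σ) (-k) = GG c σ k := by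
  unfold GG
  congr 2
  · refine intervalIntegral.integral_congr fun t _ => ?_
    rw [← abs_neg]; congr 1; ring
  · refine intervalIntegral.integral_congr fun t _ => ?_
    rw [← abs_neg]; congr 1; ring

lemma GG_refl (c σ k : ℝ) : GG (-c) σ k = GG c σ k := by
  unfold GG
  congr 2
  · have := intervalIntegral.integral_comp_neg (a := -1) (b := 1) (fun t : ℝ => |c * t - k|)
    simp only [neg_neg] at this
    rw [← this]
    refine intervalIntegral.integral_congr fun t _ => ?_
    congr 1; ring
  · have := intervalIntegral.integral_comp_sub_left (a := 0) (b := Real.pi)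
      (fun t : ℝ => |c * Real.cos t + σ * Real.sin t - k|) Real.pi
    simp only [sub_zero, sub_self, Real.cos_pi_sub, Real.sin_pi_sub] at this
    rw [← this]
    refine intervalIntegral.integral_congr fun t _ => ?_
    congr 1; ring

lemma GG_far1 (c σ k : ℝ) (h : c ^ 2 + σ ^ 2 = 1) (hk : 1 ≤ k) : GG c σ k = k - σ / Real.pi := by
  have hpi := Real.pi_pos
  unfold GG
  have h1 : ∫ t in (-1)..1, |c * t - k| = ∫ t in (-1)..1, (-c * t - (-k)) := by
    refine intervalIntegral.integral_congr fun t ht => ?_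
    rw [Set.uIcc_of_le (by norm_num)] at ht
    have : c * t ≤ 1 := by nlinarith [ht.1, ht.2, sq_nonneg (c - t), sq_nonneg σ]
    rw [abs_of_nonpos (by linarith)]; ring
  have h2 : ∫ t in (0)..Real.pi, |c * Real.cos t + σ * Real.sin t - k| =
      ∫ t in (0)..Real.pi, (-c * Real.cos t + -σ * Real.sin t - (-k)) := by
    refine intervalIntegral.integral_congr fun t ht => ?_
    have : c * Real.cos t + σ * Real.sin t ≤ 1 := by
      nlinarith [Real.sin_sq_add_cos_sq t, sq_nonneg (c - Real.cos t), sq_nonneg (σ - Real.sin t)]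
    rw [abs_of_nonpos (by linarith)]; ring
  rw [h1, h2, int_base_lin, int_arc_lin]
  field_simp; ring

lemma GG_far (c σ k : ℝ) (h : c ^ 2 + σ ^ 2 = 1) (hk : 1 ≤ |k|) :
    GG c σ k ^ 2 = (k - σ / Real.pi) ^ 2 := by
  rcases le_abs.1 hk with hk | hk
  · rw [GG_far1 c σ k h hk]
  · rw [← GG_neg, GG_far1 _ _ _ (by linarith) hk]; ring

lemma base_bound (c k : ℝ) (hc : 0 < c) : ∫ t in (-1)..1, |c * t - k| ≤ c + k ^ 2 / c := by
  have ii : ∀ a b : ℝ, IntervalIntegrable (fun t => |c * t - k|) volume a b :=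
    fun a b => Continuous.intervalIntegrable (by fun_prop) _ _
  by_cases hk : |k| ≤ c
  · obtain ⟨h1, h2⟩ := abs_le.1 hk
    have l1 : -1 ≤ k / c := by rw [le_div_iff₀ hc]; linarith
    have l2 : k / c ≤ 1 := by rw [div_le_iff₀ hc]; linarith
    rw [← intervalIntegral.integral_add_adjacent_intervals (ii (-1) (k / c)) (ii (k / c) 1)]
    have e1 : ∫ t in (-1)..(k / c), |c * t - k| = ∫ t in (-1)..(k / c), (-c * t - (-k)) := by
      refine intervalIntegral.integral_congr fun t ht => ?_
      rw [Set.uIcc_of_le l1] at ht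
      have := (le_div_iff₀ hc).1 ht.2
      rw [abs_of_nonpos (by linarith)]; ring
    have e2 : ∫ t in (k / c)..1, |c * t - k| = ∫ t in (k / c)..1, (c * t - k) := by
      refine intervalIntegral.integral_congr fun t ht => ?_
      rw [Set.uIcc_of_le l2] at ht
      have := (div_le_iff₀ hc).1 ht.1
      rw [abs_of_nonneg (by linarith)]
    rw [e1, e2, int_base_lin, int_base_lin]
    apply le_of_eq; field_simp; ring
  · push Not at hk
    have : ∫ t in (-1)..1, |c * t - k| ≤ 2 * |k| := by
      rcases le_total 0 k with h0 | h0
      · rw [abs_of_nonneg h0] at *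
        have e1 : ∫ t in (-1)..1, |c * t - k| = ∫ t in (-1)..1, (-c * t - (-k)) := by
          refine intervalIntegral.integral_congr fun t ht => ?_
          rw [Set.uIcc_of_le (by norm_num)] at ht
          rw [abs_of_nonpos (by nlinarith [ht.2])]; ring
        rw [e1, int_base_lin]; linarith
      · rw [abs_of_nonpos h0] at *
        have e1 : ∫ t in (-1)..1, |c * t - k| = ∫ t in (-1)..1, (c * t - k) := by
          refine intervalIntegral.integral_congr fun t ht => ?_
          rw [Set.uIcc_of_le (by norm_num)] at ht
          rw [abs_of_nonneg (by nlinarith [ht.1])]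
        rw [e1, int_base_lin]; linarith
    refine this.trans ?_
    have : c + k ^ 2 / c - 2 * |k| = (c - |k|) ^ 2 / c := by
      rw [← sq_abs k]; field_simp; ring
    have : 0 ≤ (c - |k|) ^ 2 / c := by positivity
    linarith

lemma corr (k : ℝ) (h0 : 0 ≤ k) (h1 : k ≤ 1) :
    ∫ t in (0)..(Real.pi / 2), max (k - Real.cos t) 0 ≤ Real.pi / 4 * k ^ 2 := by
  have hpi := Real.pi_pos
  have ii : ∀ a b : ℝ, IntervalIntegrable (fun t => max (k - Real.cos t) 0) volume a b :=
    fun a b => Continuous.intervalIntegrable (by fun_prop) _ _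
  have l0 : 0 ≤ Real.pi / 2 * (1 - k) := mul_nonneg (by positivity) (by linarith)
  have l1 : Real.pi / 2 * (1 - k) ≤ Real.pi / 2 := by nlinarith
  rw [← intervalIntegral.integral_add_adjacent_intervals (ii 0 (Real.pi / 2 * (1 - k)))
    (ii _ (Real.pi / 2))]
  have e1 : ∫ t in (0)..(Real.pi / 2 * (1 - k)), max (k - Real.cos t) 0 ≤
      ∫ t in (0)..(Real.pi / 2 * (1 - k)), (0 : ℝ) := by
    refine intervalIntegral.integral_mono_on l0 (ii _ _) (by simp) fun t ht => ?_
    have := Real.one_sub_mul_le_cos ht.1 (ht.2.trans l1)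
    have h3 : 2 / Real.pi * t ≤ 2 / Real.pi * (Real.pi / 2 * (1 - k)) := by
      gcongr; exact ht.2
    have h4 : 2 / Real.pi * (Real.pi / 2 * (1 - k)) = 1 - k := by field_simp
    exact max_le (by linarith) le_rfl
  have e2 : ∫ t in (Real.pi / 2 * (1 - k))..(Real.pi / 2), max (k - Real.cos t) 0 ≤
      ∫ t in (Real.pi / 2 * (1 - k))..(Real.pi / 2), (2 / Real.pi * t - (1 - k)) := by
    refine intervalIntegral.integral_mono_on l1 (ii _ _)
      (Continuous.intervalIntegrable (by fun_prop) _ _) fun t ht => ?_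
    have := Real.one_sub_mul_le_cos (l0.trans ht.1) ht.2
    have h3 : 2 / Real.pi * (Real.pi / 2 * (1 - k)) ≤ 2 / Real.pi * t := by
      gcongr; exact ht.1
    have h4 : 2 / Real.pi * (Real.pi / 2 * (1 - k)) = 1 - k := by field_simp
    exact max_le (by linarith) (by linarith)
  rw [int_base_lin] at e2
  simp only [intervalIntegral.integral_zero] at e1
  have : 2 / Real.pi * ((Real.pi / 2) ^ 2 - (Real.pi / 2 * (1 - k)) ^ 2) / 2 -
      (1 - k) * (Real.pi / 2 - Real.pi / 2 * (1 - k)) = Real.pi / 4 * k ^ 2 := by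
    field_simp; ring
  linarith

lemma int_cos_lin (k a b : ℝ) : ∫ t in a..b, (Real.cos t - k) =
    Real.sin b - Real.sin a - k * (b - a) := by
  rw [intervalIntegral.integral_sub (Continuous.intervalIntegrable (by fun_prop) _ _)
    (Continuous.intervalIntegrable (by fun_prop) _ _)]
  simp; ring

/-- Common decomposition of the arc integral. -/
lemma arc_decomp (k φ : ℝ) (h0 : 0 ≤ k) (hφ : |φ| ≤ Real.pi / 2) :
    ∫ t in (-φ)..(Real.pi - φ), |Real.cos t - k| =
      2 - 2 * φ * k + 2 * ∫ t in (-φ)..(Real.pi / 2), max (k - Real.cos t) 0 := by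
  obtain ⟨p1, p2⟩ := abs_le.1 hφ
  have ii : ∀ a b : ℝ, IntervalIntegrable (fun t => |Real.cos t - k|) volume a b :=
    fun a b => Continuous.intervalIntegrable (by fun_prop) _ _
  rw [← intervalIntegral.integral_add_adjacent_intervals (ii (-φ) (Real.pi / 2))
    (ii _ (Real.pi - φ))]
  have e1 : ∫ t in (-φ)..(Real.pi / 2), |Real.cos t - k| =
      ∫ t in (-φ)..(Real.pi / 2), ((Real.cos t - k) + 2 * max (k - Real.cos t) 0) := by
    refine intervalIntegral.integral_congr fun t ht => ?_
    rcases le_total k (Real.cos t) with h | h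
    · rw [abs_of_nonneg (by linarith), max_eq_right (by linarith)]; ring
    · rw [abs_of_nonpos (by linarith), max_eq_left (by linarith)]; ring
  have e2 : ∫ t in (Real.pi / 2)..(Real.pi - φ), |Real.cos t - k| =
      -∫ t in (Real.pi / 2)..(Real.pi - φ), (Real.cos t - k) := by
    rw [← intervalIntegral.integral_neg]
    refine intervalIntegral.integral_congr fun t ht => ?_
    rw [Set.uIcc_of_le (by linarith)] at ht
    have := Real.cos_nonpos_of_pi_div_two_le_of_le ht.1 (by linarith [ht.2])
    rw [abs_of_nonpos (by linarith)]
  rw [e1, e2, intervalIntegral.integral_add (Continuous.intervalIntegrable (by fun_prop) _ _)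
    (Continuous.intervalIntegrable (by fun_prop) _ _), intervalIntegral.integral_const_mul,
    int_cos_lin, int_cos_lin]
  simp only [Real.sin_pi_div_two, Real.sin_neg, Real.sin_pi_sub]
  ring

lemma arc_pos (k φ : ℝ) (h0 : 0 ≤ k) (h1 : k ≤ 1) (p0 : 0 ≤ φ) (p1 : φ < Real.pi / 2) :
    ∫ t in (-φ)..(Real.pi - φ), |Real.cos t - k| ≤
      2 - 2 * φ * k + Real.pi / 2 * k ^ 2 + φ * k ^ 2 / (2 * Real.cos φ) := by
  have hc : 0 < Real.cos φ := Real.cos_pos_of_mem_Ioo ⟨by linarith, p1⟩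
  rw [arc_decomp k φ h0 (by rw [abs_of_nonneg p0]; exact p1.le)]
  have ii : ∀ a b : ℝ, IntervalIntegrable (fun t => max (k - Real.cos t) 0) volume a b :=
    fun a b => Continuous.intervalIntegrable (by fun_prop) _ _
  rw [← intervalIntegral.integral_add_adjacent_intervals (ii (-φ) 0) (ii _ (Real.pi / 2))]
  have e1 : ∫ t in (-φ)..0, max (k - Real.cos t) 0 ≤ ∫ t in (-φ)..0, k ^ 2 / (4 * Real.cos φ) := by
    refine intervalIntegral.integral_mono_on (by linarith) (ii _ _) (by simp) fun t ht => ?_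
    have : Real.cos φ ≤ Real.cos t := by
      rw [← Real.cos_neg t]
      exact Real.cos_le_cos_of_nonneg_of_le_pi (by linarith [ht.2]) (by linarith [Real.pi_pos])
        (by linarith [ht.1])
    refine max_le ?_ (by positivity)
    rw [le_div_iff₀ (by positivity)]
    nlinarith [sq_nonneg (k - 2 * Real.cos φ)]
  simp only [intervalIntegral.integral_const, smul_eq_mul] at e1
  have := corr k h0 h1
  have e : (0 - -φ) * (k ^ 2 / (4 * Real.cos φ)) = (φ * k ^ 2 / (2 * Real.cos φ)) / 2 := by
    field_simp; ring
  linarith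

lemma arc_neg (k φ : ℝ) (h0 : 0 ≤ k) (h1 : k ≤ 1) (p0 : 0 ≤ φ) (p1 : φ < Real.pi / 2) :
    ∫ t in φ..(Real.pi + φ), |Real.cos t - k| ≤ 2 + 2 * φ * k + Real.pi / 2 * k ^ 2 := by
  have := arc_decomp k (-φ) h0 (by rw [abs_neg, abs_of_nonneg p0]; exact p1.le)
  rw [neg_neg, sub_neg_eq_add] at this
  rw [this]
  have ii : ∀ a b : ℝ, IntervalIntegrable (fun t => max (k - Real.cos t) 0) volume a b :=
    fun a b => Continuous.intervalIntegrable (by fun_prop) _ _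
  have h2 := intervalIntegral.integral_add_adjacent_intervals (ii 0 φ) (ii φ (Real.pi / 2))
  have h3 : 0 ≤ ∫ t in (0)..φ, max (k - Real.cos t) 0 :=
    intervalIntegral.integral_nonneg p0 fun t _ => le_max_right _ _
  have := corr k h0 h1
  linarith

lemma GG_rot (φ k : ℝ) : ∫ t in (0)..Real.pi, |Real.cos φ * Real.cos t + Real.sin φ * Real.sin t - k|
    = ∫ t in (-φ)..(Real.pi - φ), |Real.cos t - k| := by
  have := intervalIntegral.integral_comp_sub_right (a := 0) (b := Real.pi)
    (fun t : ℝ => |Real.cos t - k|) φ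
  rw [zero_sub] at this
  rw [← this]
  refine intervalIntegral.integral_congr fun t _ => ?_
  rw [Real.cos_sub]; congr 1; ring

lemma GG_pos (k φ : ℝ) (h0 : 0 ≤ k) (h1 : k ≤ 1) (p0 : 0 ≤ φ) (p1 : φ < Real.pi / 2) :
    GG (Real.cos φ) (Real.sin φ) k ≤ Real.cos φ / 4 + 1 / Real.pi - φ * (1 / Real.pi) * k +
      k ^ 2 * (1 / (4 * Real.cos φ) + 1 / 4 + φ * (1 / Real.pi) / (4 * Real.cos φ)) := by
  have hc : 0 < Real.cos φ := Real.cos_pos_of_mem_Ioo ⟨by linarith, p1⟩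
  have hpi := Real.pi_pos
  unfold GG
  rw [GG_rot]
  have a1 := base_bound (Real.cos φ) k hc
  have a2 := mul_le_mul_of_nonneg_left (arc_pos k φ h0 h1 p0 p1)
    (show 0 ≤ 1 / (2 * Real.pi) by positivity)
  have a1' := mul_le_mul_of_nonneg_left a1 (show (0 : ℝ) ≤ 1 / 4 by norm_num)
  refine (add_le_add a1' a2).trans (le_of_eq ?_)
  field_simp; ring

lemma GG_negk (k φ : ℝ) (h0 : 0 ≤ k) (h1 : k ≤ 1) (p0 : 0 ≤ φ) (p1 : φ < Real.pi / 2) :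
    GG (Real.cos φ) (Real.sin φ) (-k) ≤ Real.cos φ / 4 + 1 / Real.pi + φ * (1 / Real.pi) * k +
      k ^ 2 * (1 / (4 * Real.cos φ) + 1 / 4) := by
  have hc : 0 < Real.cos φ := Real.cos_pos_of_mem_Ioo ⟨by linarith, p1⟩
  have hpi := Real.pi_pos
  unfold GG
  have hr : ∫ t in (0)..Real.pi, |Real.cos φ * Real.cos t + Real.sin φ * Real.sin t - (-k)| =
      ∫ t in φ..(Real.pi + φ), |Real.cos t - k| := by
    rw [GG_rot]
    have := intervalIntegral.integral_comp_sub_left (a := -φ) (b := Real.pi - φ)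
      (fun t : ℝ => |Real.cos t - k|) Real.pi
    rw [show Real.pi - (Real.pi - φ) = φ by ring, sub_neg_eq_add] at this
    rw [← this]
    refine intervalIntegral.integral_congr fun t _ => ?_
    rw [Real.cos_pi_sub, ← abs_neg]; congr 1; ring
  rw [hr]
  have a1 := base_bound (Real.cos φ) (-k) hc
  have a2 := mul_le_mul_of_nonneg_left (arc_neg k φ h0 h1 p0 p1)
    (show 0 ≤ 1 / (2 * Real.pi) by positivity)
  have a1' := mul_le_mul_of_nonneg_left a1 (show (0 : ℝ) ≤ 1 / 4 by norm_num)
  refine (add_le_add a1' a2).trans (le_of_eq ?_)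
  field_simp; ring

lemma GG_nonneg (c σ k : ℝ) : 0 ≤ GG c σ k := by
  have hpi := Real.pi_pos
  unfold GG
  have h1 : 0 ≤ ∫ t in (-1)..1, |c * t - k| :=
    intervalIntegral.integral_nonneg (by norm_num) fun t _ => abs_nonneg _
  have h2 : 0 ≤ ∫ t in (0)..Real.pi, |c * Real.cos t + σ * Real.sin t - k| :=
    intervalIntegral.integral_nonneg hpi.le fun t _ => abs_nonneg _
  positivity
lemma beta_bounds : 0.3183 < 1 / Real.pi ∧ 1 / Real.pi < 0.31832 := by
  have h1 := Real.pi_gt_d4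
  have h2 := Real.pi_lt_d4
  constructor
  · rw [lt_div_iff₀ Real.pi_pos]; linarith
  · rw [div_lt_iff₀ Real.pi_pos]; linarith

lemma c_bounds (c σ : ℝ) (h : c ^ 2 + σ ^ 2 = 1) (hc : 4 / 5 ≤ c) :
    c ≤ 1 - σ ^ 2 / 2 ∧ 1 / c ≤ 1 + 0.6945 * σ ^ 2 := by
  have hc1 : c ≤ 1 := by nlinarith [sq_nonneg σ]
  constructor
  · nlinarith [sq_nonneg (1 - c)]
  · rw [div_le_iff₀ (by linarith)]
    have e : σ ^ 2 = 1 - c ^ 2 := by linarith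
    rw [e]
    have : 0 ≤ (1 - c) * (-1 + 0.6945 * (c * (1 + c))) := by
      apply mul_nonneg (by linarith); nlinarith
    nlinarith

lemma quad_pos (σ k : ℝ) (s0 : 0 ≤ σ) (s1 : σ ≤ 3 / 5) (k0 : 0 ≤ k) (k1 : k ≤ 1) :
    0 ≤ k ^ 2 * (0.18 - 0.17712 * σ - 0.28536 * σ ^ 2) - 0.36 * 0.31832 * (σ * k)
          + 0.305 * σ ^ 2 := by
  have hk1 : k ^ 2 ≤ 1 := by nlinarith
  have hsk : σ * k ≤ σ := by nlinarith
  have hkk := sq_nonneg k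
  rcases le_total σ 0.51 with q | q
  · have : 0.0152 ≤ 0.18 - 0.17712 * σ - 0.28536 * σ ^ 2 := by nlinarith
    have := mul_le_mul_of_nonneg_left this hkk
    have h2 := sq_nonneg (k - 4 * σ)
    have h3 : (k - 4 * σ) ^ 2 = k ^ 2 - 8 * (σ * k) + 16 * σ ^ 2 := by ring
    have h4 := sq_nonneg σ
    linarith
  · rcases le_total σ 0.56 with q' | q'
    · have : -0.01 ≤ 0.18 - 0.17712 * σ - 0.28536 * σ ^ 2 := by nlinarith
      have := mul_le_mul_of_nonneg_left this hkk
      have h5 : 0 ≤ -0.01 - 0.36 * 0.31832 * σ + 0.305 * σ ^ 2 := by nlinarith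
      linarith
    · have : -0.03 ≤ 0.18 - 0.17712 * σ - 0.28536 * σ ^ 2 := by nlinarith
      have := mul_le_mul_of_nonneg_left this hkk
      have h5 : 0 ≤ -0.03 - 0.36 * 0.31832 * σ + 0.305 * σ ^ 2 := by nlinarith
      linarith

lemma quad_neg (σ k : ℝ) (s0 : 0 ≤ σ) (s1 : σ ≤ 3 / 5) (k0 : 0 ≤ k) (k1 : k ≤ 1) :
    (k ^ 2 * (0.5 + 0.174 * σ ^ 2) + 0.34252 * (σ * k) - σ ^ 2 / 8) *
          (1.63664 + 0.38 * σ) ≤ k ^ 2 + 0.6366 * (σ * k) + 0.1013 * σ ^ 2 := by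
  have hk1 : k ^ 2 ≤ 1 := by nlinarith
  have hsk : σ * k ≤ σ := by nlinarith
  have hsk0 : 0 ≤ σ * k := by positivity
  have hkk := sq_nonneg k
  have hss := sq_nonneg σ
  have e : k ^ 2 + 0.6366 * (σ * k) + 0.1013 * σ ^ 2 -
      (k ^ 2 * (0.5 + 0.174 * σ ^ 2) + 0.34252 * (σ * k) - σ ^ 2 / 8) * (1.63664 + 0.38 * σ) =
      k ^ 2 * (1 - (0.5 + 0.174 * σ ^ 2) * (1.63664 + 0.38 * σ)) +
      σ * k * (0.6366 - 0.34252 * (1.63664 + 0.38 * σ)) +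
      σ ^ 2 * (0.1013 + (1.63664 + 0.38 * σ) / 8) := by ring
  have m1 := mul_le_mul_of_nonneg_left
    (show -0.0022 ≤ 0.6366 - 0.34252 * (1.63664 + 0.38 * σ) by linarith) hsk0
  have m2 := mul_le_mul_of_nonneg_left
    (show 0.3 ≤ 0.1013 + (1.63664 + 0.38 * σ) / 8 by linarith) hss
  rcases le_total σ 0.5 with q | q
  · have a1 : (0.5 + 0.174 * σ ^ 2) * (1.63664 + 0.38 * σ) ≤
        (0.5 + 0.174 * 0.5 ^ 2) * (1.63664 + 0.38 * 0.5) := by gcongr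
    have m3 := mul_le_mul_of_nonneg_left
      (show 0.005 ≤ 1 - (0.5 + 0.174 * σ ^ 2) * (1.63664 + 0.38 * σ) by linarith) hkk
    have h2 := sq_nonneg (k - σ)
    have h3 : (k - σ) ^ 2 = k ^ 2 - 2 * (σ * k) + σ ^ 2 := by ring
    linarith
  · have a1 : (0.5 + 0.174 * σ ^ 2) * (1.63664 + 0.38 * σ) ≤
        (0.5 + 0.174 * (3 / 5) ^ 2) * (1.63664 + 0.38 * (3 / 5)) := by gcongr
    have m3 := mul_le_mul_of_nonneg_left
      (show -0.05 ≤ 1 - (0.5 + 0.174 * σ ^ 2) * (1.63664 + 0.38 * σ) by linarith) hkk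
    have : 0.25 ≤ σ ^ 2 := by nlinarith
    linarith

lemma poly_pos (β σ k : ℝ) (b1 : 0.3183 < β) (b2 : β < 0.31832) (s0 : 0 ≤ σ) (s1 : σ ≤ 3 / 5)
    (k0 : 0 ≤ k) (k1 : k ≤ 1) (X : ℝ) (X0 : 0 ≤ X)
    (hX : X ≤ 1 / 4 + β + (k ^ 2 * (0.5 + 0.174 * σ ^ 2 + 0.108 * σ) - σ * β * k - σ ^ 2 / 8)) :
    X ^ 2 ≤ (1 / 4 + β) ^ 2 + (k - σ * β) ^ 2 := by
  set e := k ^ 2 * (0.5 + 0.174 * σ ^ 2 + 0.108 * σ) - σ * β * k - σ ^ 2 / 8 with he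
  have hX2 : X ^ 2 ≤ (1 / 4 + β + e) ^ 2 := pow_le_pow_left₀ X0 hX 2
  have hpos : 0 ≤ 1 / 4 + β + e := X0.trans hX
  have hk2 : k ^ 2 ≤ k := by nlinarith
  have he5 : e ≤ 0.5 := by
    have a1 : k ^ 2 * (0.5 + 0.174 * σ ^ 2 + 0.108 * σ) ≤ k * (0.5 + 0.174 * σ ^ 2 + 0.108 * σ) := by
      gcongr
    have a2 : k * (0.5 + 0.174 * σ ^ 2 + 0.108 * σ - σ * β) ≤ k * 0.5 := by
      apply mul_le_mul_of_nonneg_left _ k0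
      nlinarith
    nlinarith
  rcases le_total e 0 with h | h
  · nlinarith [sq_nonneg (k - σ * β)]
  · have h2 : e * (1 / 2 + 2 * β + e) ≤ e * 1.64 := by
      apply mul_le_mul_of_nonneg_left _ h; linarith
    have h3 : e * 1.64 ≤ (k - σ * β) ^ 2 := by
      have t1 : 0 ≤ σ * k := by positivity
      have t2 : 0 ≤ σ ^ 2 * (β ^ 2 - 0.1) := by
        apply mul_nonneg (by positivity); nlinarith
      have t3 : σ * k * β ≤ σ * k * 0.31832 := by gcongr
      have t4 : k ^ 2 * σ ≤ 1 * σ := by gcongr; nlinarith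
      have t5 : 0 ≤ k ^ 2 * (0.18 - 0.17712 * σ - 0.28536 * σ ^ 2) - 0.36 * 0.31832 * (σ * k)
          + 0.305 * σ ^ 2 := by
        exact quad_pos σ k s0 s1 k0 k1
      have t9 : (k - σ * β) ^ 2 - e * 1.64 = (k ^ 2 * (0.18 - 0.17712 * σ - 0.28536 * σ ^ 2)
          - 0.36 * (σ * k * β) + (0.205 + β ^ 2) * σ ^ 2) := by
        rw [he]; ring
      linarith
    nlinarith

lemma poly_neg (β σ k : ℝ) (b1 : 0.3183 < β) (b2 : β < 0.31832) (s0 : 0 ≤ σ) (s1 : σ ≤ 3 / 5)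
    (k0 : 0 ≤ k) (k1 : k ≤ 1) (X : ℝ) (X0 : 0 ≤ X)
    (hX : X ≤ 1 / 4 + β + (k ^ 2 * (0.5 + 0.174 * σ ^ 2) + 1.076 * σ * β * k - σ ^ 2 / 8)) :
    X ^ 2 ≤ (1 / 4 + β) ^ 2 + (k + σ * β) ^ 2 := by
  set e := k ^ 2 * (0.5 + 0.174 * σ ^ 2) + 1.076 * σ * β * k - σ ^ 2 / 8 with he
  have hX2 : X ^ 2 ≤ (1 / 4 + β + e) ^ 2 := pow_le_pow_left₀ X0 hX 2
  have hpos : 0 ≤ 1 / 4 + β + e := X0.trans hX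
  have hk2 : k ^ 2 ≤ k := by nlinarith
  have hk1 : k ^ 2 ≤ 1 := hk2.trans k1
  have hsk0 : 0 ≤ σ * k := by positivity
  have hsk : σ * k ≤ σ := by nlinarith
  have hs2 : σ ^ 2 ≤ 0.6 * σ := by nlinarith
  have hb : σ * k * β ≤ σ * k * 0.31832 := by gcongr
  have hb' : σ * k * 0.3183 ≤ σ * k * β := by gcongr
  have he5 : e ≤ 0.5 + 0.38 * σ := by
    have a1 : k ^ 2 * (0.5 + 0.174 * σ ^ 2) ≤ 1 * (0.5 + 0.174 * σ ^ 2) := by gcongr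
    nlinarith
  rcases le_total e 0 with h | h
  · nlinarith [sq_nonneg (k + σ * β)]
  · have h2 : e * (1 / 2 + 2 * β + e) ≤ e * (1.63664 + 0.38 * σ) := by
      apply mul_le_mul_of_nonneg_left _ h; linarith
    have h3 : e * (1.63664 + 0.38 * σ) ≤ (k + σ * β) ^ 2 := by
      have e1 : e ≤ k ^ 2 * (0.5 + 0.174 * σ ^ 2) + 0.34252 * (σ * k) - σ ^ 2 / 8 := by
        rw [he]; linarith
      have e2 := mul_le_mul_of_nonneg_right e1 (show 0 ≤ 1.63664 + 0.38 * σ by positivity)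
      have e3 : k ^ 2 + 0.6366 * (σ * k) + 0.1013 * σ ^ 2 ≤ (k + σ * β) ^ 2 := by
        have hb2 : 0.1013 ≤ β ^ 2 := by nlinarith
        have := mul_le_mul_of_nonneg_left hb2 (sq_nonneg σ)
        have h9 : (k + σ * β) ^ 2 = k ^ 2 + 2 * (σ * k * β) + σ ^ 2 * β ^ 2 := by ring
        linarith
      have e4 : (k ^ 2 * (0.5 + 0.174 * σ ^ 2) + 0.34252 * (σ * k) - σ ^ 2 / 8) *
          (1.63664 + 0.38 * σ) ≤ k ^ 2 + 0.6366 * (σ * k) + 0.1013 * σ ^ 2 := by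
        exact quad_neg σ k s0 s1 k0 k1
      linarith
    nlinarith

lemma main_pos (φ k : ℝ) (p0 : 0 ≤ φ) (p1 : φ < Real.pi / 2) (hc : 4 / 5 ≤ Real.cos φ)
    (hk : |k| ≤ 1) : GG (Real.cos φ) (Real.sin φ) k ^ 2 ≤
      (1 / 4 + 1 / Real.pi) ^ 2 + (k - Real.sin φ * (1 / Real.pi)) ^ 2 := by
  obtain ⟨b1, b2⟩ := beta_bounds
  have hsc : Real.cos φ ^ 2 + Real.sin φ ^ 2 = 1 := by
    rw [add_comm]; exact Real.sin_sq_add_cos_sq φ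
  obtain ⟨c1, c2⟩ := c_bounds _ _ hsc hc
  have s0 : 0 ≤ Real.sin φ := Real.sin_nonneg_of_nonneg_of_le_pi p0 (by linarith [Real.pi_pos])
  have s1 : Real.sin φ ≤ 3 / 5 := by nlinarith
  have f1 : Real.sin φ ≤ φ := Real.sin_le p0
  have f2 : φ ≤ 0.65 := by
    by_contra hcon
    push Not at hcon
    have h1 : Real.sin 0.65 ≤ Real.sin φ :=
      Real.sin_le_sin_of_le_of_le_pi_div_two (by linarith [Real.pi_pos]) p1.le hcon.le
    have h2 := Real.sin_gt_sub_cube (x := 0.65) (by norm_num)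
    norm_num at h2
    linarith
  have f3 : φ ≤ 1.076 * Real.sin φ := by
    rcases p0.eq_or_lt with h | h
    · rw [← h]; simp
    have h2 := Real.sin_gt_sub_cube h
    have : φ ^ 3 ≤ 0.65 ^ 2 * φ := by
      have : φ ^ 2 ≤ 0.65 ^ 2 := by gcongr
      calc φ ^ 3 = φ ^ 2 * φ := by ring
        _ ≤ _ := by gcongr
    linarith
  have hG := GG_nonneg (Real.cos φ) (Real.sin φ) k
  set σ := Real.sin φ
  set c := Real.cos φ
  set β := 1 / Real.pi
  have e1 : 1 / (4 * c) = 1 / c / 4 := by rw [div_div, mul_comm]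
  rcases le_total 0 k with h0 | h0
  · have k1 : k ≤ 1 := (le_abs_self k).trans hk
    refine poly_pos β σ k b1 b2 s0 s1 h0 k1 _ hG ?_
    have := GG_pos k φ h0 k1 p0 p1
    refine this.trans ?_
    have e2 : φ * β / (4 * c) = φ * β * (1 / c) / 4 := by ring
    have g1 : φ * β * (1 / c) ≤ 1.076 * σ * 0.31832 * 1.26 := by
      have : 1 / c ≤ 1.26 := by nlinarith
      have : 0 ≤ 1 / c := by positivity
      gcongr
    have g2 : k ^ 2 * (1 / (4 * c) + 1 / 4 + φ * β / (4 * c)) ≤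
        k ^ 2 * (0.5 + 0.174 * σ ^ 2 + 0.108 * σ) := by
      apply mul_le_mul_of_nonneg_left _ (sq_nonneg _)
      rw [e1, e2]
      nlinarith
    have g3 : σ * β * k ≤ φ * β * k := by gcongr
    linarith
  · have k1 : -k ≤ 1 := (neg_le_abs k).trans hk
    have := GG_negk (-k) φ (by linarith) k1 p0 p1
    rw [neg_neg] at this
    have := poly_neg β σ (-k) b1 b2 s0 s1 (by linarith) k1 _ hG ?_
    · refine this.trans (le_of_eq ?_); ring
    refine this.trans ?_
    have g2 : (-k) ^ 2 * (1 / (4 * c) + 1 / 4) ≤ (-k) ^ 2 * (0.5 + 0.174 * σ ^ 2) := by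
      apply mul_le_mul_of_nonneg_left _ (sq_nonneg _)
      rw [e1]
      nlinarith
    have g3 : φ * β * (-k) ≤ 1.076 * σ * β * (-k) := by
      have : 0 ≤ -k := by linarith
      gcongr
    linarith

lemma GG_main (c σ k : ℝ) (h : c ^ 2 + σ ^ 2 = 1) : GG c σ k ^ 2 ≤
      (1 / 4 + 1 / Real.pi) ^ 2 + (k - σ * (1 / Real.pi)) ^ 2 := by
  wlog hs : 0 ≤ σ generalizing c σ k
  · have := this (-c) (-σ) (-k) (by linarith) (by linarith)
    rw [GG_neg] at this
    refine this.trans (le_of_eq ?_); ring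
  wlog hc : 0 ≤ c generalizing c
  · have := this (-c) (by linarith) (by linarith)
    rwa [GG_refl] at this
  rcases le_total 1 |k| with hk | hk
  · rw [GG_far c σ k h hk]
    have := sq_nonneg (1 / 4 + 1 / Real.pi)
    rw [show σ / Real.pi = σ * (1 / Real.pi) by ring]
    linarith
  rcases le_total c (4 / 5) with h4 | h4
  · refine (GG_cs c σ k).trans ?_
    rw [show σ / Real.pi = σ * (1 / Real.pi) by ring]
    obtain ⟨b1, b2⟩ := beta_bounds
    set β := 1 / Real.pi
    have e : σ ^ 2 = 1 - c ^ 2 := by linarith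
    have : c ^ 2 ≤ 16 / 25 := by nlinarith
    have hb : 0.1013 ≤ β ^ 2 := by nlinarith
    have hq : 5 / 12 * c ^ 2 + σ ^ 2 * (1 / 4 - β ^ 2) ≤ 0.3226 := by
      have : σ ^ 2 * (1 / 4 - β ^ 2) ≤ σ ^ 2 * (1 / 4 - 0.1013) := by gcongr
      rw [e] at this ⊢
      linarith
    have : 0.3226 ≤ (1 / 4 + β) ^ 2 := by nlinarith
    linarith
  · have hpi := Real.pi_pos
    have hs1 : σ < 1 := by nlinarith
    have es : Real.sin (Real.arcsin σ) = σ := Real.sin_arcsin (by linarith) hs1.le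
    have ec : Real.cos (Real.arcsin σ) = c := by
      rw [Real.cos_arcsin, show 1 - σ ^ 2 = c ^ 2 by linarith, Real.sqrt_sq hc]
    have := main_pos (Real.arcsin σ) k (Real.arcsin_nonneg.2 hs) (Real.arcsin_lt_pi_div_two.2 hs1)
      (by rw [ec]; exact h4) hk
    rwa [es, ec] at this
lemma sInf_pair_eq (p q x : E2) :
    sInf ((fun a => ‖x - a‖ ^ 2) '' ({p, q} : Set E2)) = min (‖x - p‖ ^ 2) (‖x - q‖ ^ 2) := by
  rw [Set.image_pair, csInf_pair]

/-- The distortion error as a formula. `m = (m1,m2)` is the midpoint,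
`r * (c,σ)` the half difference. -/
lemma err_formula (m1 m2 c σ r : ℝ) (h : c ^ 2 + σ ^ 2 = 1) (hr : 0 ≤ r) :
    ∫ x, sInf ((fun a => ‖x - a‖ ^ 2) ''
      ({pt (m1 - r * c) (m2 - r * σ), pt (m1 + r * c) (m2 + r * σ)} : Set E2)) ∂semiP =
    2 / 3 - 2 * m2 * (1 / Real.pi) + m1 ^ 2 + m2 ^ 2 + r ^ 2
      - 2 * r * GG c σ (c * m1 + σ * m2) := by
  have hpi := Real.pi_pos
  simp_rw [sInf_pair_eq]
  rw [semiP_integral _ (by fun_prop)]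
  have key : ∀ x y : ℝ, min (‖pt x y - pt (m1 - r * c) (m2 - r * σ)‖ ^ 2)
      (‖pt x y - pt (m1 + r * c) (m2 + r * σ)‖ ^ 2) =
      (x - m1) ^ 2 + (y - m2) ^ 2 + r ^ 2 - 2 * r * |c * x + σ * y - (c * m1 + σ * m2)| := by
    intro x y
    rw [pt_sub, pt_sub, pt_norm_sq, pt_norm_sq]
    set w := c * x + σ * y - (c * m1 + σ * m2) with hw
    have e1 : (x - (m1 - r * c)) ^ 2 + (y - (m2 - r * σ)) ^ 2 =
      (x - m1) ^ 2 + (y - m2) ^ 2 + r ^ 2 + 2 * r * w := by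
      rw [hw]; linear_combination r ^ 2 * h
    have e2 : (x - (m1 + r * c)) ^ 2 + (y - (m2 + r * σ)) ^ 2 =
      (x - m1) ^ 2 + (y - m2) ^ 2 + r ^ 2 - 2 * r * w := by
      rw [hw]; linear_combination r ^ 2 * h
    rw [e1, e2]
    rcases le_total 0 w with h0 | h0
    · rw [abs_of_nonneg h0, min_eq_right]; nlinarith
    · rw [abs_of_nonpos h0, min_eq_left]
      · ring
      · nlinarith
  simp_rw [key]
  have h1 : ∫ t in (-1)..1, ((t - m1) ^ 2 + (0 - m2) ^ 2 + r ^ 2 -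
      2 * r * |c * t + σ * 0 - (c * m1 + σ * m2)|) =
      2 / 3 + 2 * m1 ^ 2 + 2 * (m2 ^ 2 + r ^ 2) -
      2 * r * ∫ t in (-1)..1, |c * t - (c * m1 + σ * m2)| := by
    rw [intervalIntegral.integral_sub (Continuous.intervalIntegrable (by fun_prop) _ _)
      (Continuous.intervalIntegrable (by fun_prop) _ _), intervalIntegral.integral_const_mul,
      intervalIntegral.integral_add (Continuous.intervalIntegrable (by fun_prop) _ _)
      (Continuous.intervalIntegrable (by fun_prop) _ _),
      intervalIntegral.integral_add (Continuous.intervalIntegrable (by fun_prop) _ _)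
      (Continuous.intervalIntegrable (by fun_prop) _ _)]
    have := int_base_sq 1 m1
    simp only [one_mul] at this
    rw [this]
    simp
    ring
  have h2 : ∫ t in (0)..Real.pi, ((Real.cos t - m1) ^ 2 + (Real.sin t - m2) ^ 2 + r ^ 2 -
      2 * r * |c * Real.cos t + σ * Real.sin t - (c * m1 + σ * m2)|) =
      Real.pi * (1 + m1 ^ 2 + m2 ^ 2 + r ^ 2) - 4 * m2 -
      2 * r * ∫ t in (0)..Real.pi, |c * Real.cos t + σ * Real.sin t - (c * m1 + σ * m2)| := by
    rw [intervalIntegral.integral_sub (Continuous.intervalIntegrable (by fun_prop) _ _)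
      (Continuous.intervalIntegrable (by fun_prop) _ _), intervalIntegral.integral_const_mul,
      intervalIntegral.integral_add (Continuous.intervalIntegrable (by fun_prop) _ _)
      (Continuous.intervalIntegrable (by fun_prop) _ _),
      intervalIntegral.integral_add (Continuous.intervalIntegrable (by fun_prop) _ _)
      (Continuous.intervalIntegrable (by fun_prop) _ _)]
    have e1 := int_arc_sq 1 0 m1
    have e2 := int_arc_sq 0 1 m2
    simp only [one_mul, zero_mul, add_zero, zero_add] at e1 e2
    rw [e1, e2]
    simp
    ring
  rw [h1, h2]
  unfold GG
  field_simp
  ring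

def VV : ℝ := 2 / 3 - (1 / Real.pi) ^ 2 - (1 / 4 + 1 / Real.pi) ^ 2

lemma polar (a b : ℝ) : ∃ r c σ : ℝ, 0 ≤ r ∧ c ^ 2 + σ ^ 2 = 1 ∧ a = r * c ∧ b = r * σ := by
  refine ⟨‖(⟨a, b⟩ : ℂ)‖, Real.cos (Complex.arg ⟨a, b⟩), Real.sin (Complex.arg ⟨a, b⟩),
    norm_nonneg _, by rw [add_comm]; exact Real.sin_sq_add_cos_sq _, ?_, ?_⟩
  · rw [Complex.norm_mul_cos_arg]
  · rw [Complex.norm_mul_sin_arg]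

lemma err_ge (p q : E2) : VV ≤ ∫ x, sInf ((fun a => ‖x - a‖ ^ 2) '' ({p, q} : Set E2)) ∂semiP := by
  obtain ⟨r, c, σ, hr, h, h1, h2⟩ := polar ((q 0 - p 0) / 2) ((q 1 - p 1) / 2)
  have ep : p = pt ((p 0 + q 0) / 2 - r * c) ((p 1 + q 1) / 2 - r * σ) := by
    rw [← h1, ← h2]
    ext i; fin_cases i <;> simp [pt] <;> ring
  have eq : q = pt ((p 0 + q 0) / 2 + r * c) ((p 1 + q 1) / 2 + r * σ) := by
    rw [← h1, ← h2]
    ext i; fin_cases i <;> simp [pt] <;> ring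
  generalize (p 0 + q 0) / 2 = m1 at ep eq
  generalize (p 1 + q 1) / 2 = m2 at ep eq
  rw [ep, eq, err_formula m1 m2 c σ r h hr]
  have hG := GG_main c σ (c * m1 + σ * m2) h
  unfold VV
  set G := GG c σ (c * m1 + σ * m2)
  set β := 1 / Real.pi
  have hcs : (c * m1 + σ * m2 - σ * β) ^ 2 ≤ m1 ^ 2 + (m2 - β) ^ 2 := by
    have : m1 ^ 2 + (m2 - β) ^ 2 - (c * m1 + σ * m2 - σ * β) ^ 2 = (σ * m1 - c * (m2 - β)) ^ 2 := by
      linear_combination -(m1 ^ 2 + (m2 - β) ^ 2) * h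
    nlinarith [sq_nonneg (σ * m1 - c * (m2 - β))]
  nlinarith [sq_nonneg (r - G)]

lemma GG_zero : 1 / 4 + 1 / Real.pi ≤ GG 1 0 0 := by
  have hpi := Real.pi_pos
  unfold GG
  simp only [one_mul, zero_mul, add_zero, sub_zero]
  have h1 : (1 : ℝ) ≤ ∫ t in (-1 : ℝ)..1, |t| := by
    have ii : ∀ a b : ℝ, IntervalIntegrable (fun t : ℝ => |t|) volume a b :=
      fun a b => Continuous.intervalIntegrable (by fun_prop) _ _
    rw [← intervalIntegral.integral_add_adjacent_intervals (ii (-1) 0) (ii 0 1)]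
    have a1 : ∫ t in (-1 : ℝ)..0, (-1 * t - 0) ≤ ∫ t in (-1 : ℝ)..0, |t| :=
      intervalIntegral.integral_mono_on (by norm_num)
        (Continuous.intervalIntegrable (by fun_prop) _ _) (ii _ _)
        fun t _ => by linarith [neg_le_abs t]
    have a2 : ∫ t in (0 : ℝ)..1, (1 * t - 0) ≤ ∫ t in (0 : ℝ)..1, |t| :=
      intervalIntegral.integral_mono_on (by norm_num)
        (Continuous.intervalIntegrable (by fun_prop) _ _) (ii _ _)
        fun t _ => by linarith [le_abs_self t]
    rw [int_base_lin] at a1 a2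
    linarith
  have h2 : 2 ≤ ∫ t in (0)..Real.pi, |Real.cos t| := by
    have := arc_decomp 0 0 le_rfl (by simp; positivity)
    simp only [sub_zero, neg_zero, mul_zero] at this
    rw [this]
    have : 0 ≤ ∫ t in (0)..(Real.pi / 2), max (0 - Real.cos t) 0 :=
      intervalIntegral.integral_nonneg (by positivity) fun t _ => le_max_right _ _
    linarith
  have h2' := mul_le_mul_of_nonneg_left h2 (show 0 ≤ 1 / (2 * Real.pi) by positivity)
  have : 1 / (2 * Real.pi) * 2 = 1 / Real.pi := by field_simp
  linarith

lemma err_opt : ∫ x, sInf ((fun a => ‖x - a‖ ^ 2) ''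
    ({pt (-(1/4) - 1 / Real.pi) (1 / Real.pi), pt (1/4 + 1 / Real.pi) (1 / Real.pi)} : Set E2)) ∂semiP
    = VV := by
  refine le_antisymm ?_ (err_ge _ _)
  have hpi := Real.pi_pos
  have := err_formula 0 (1 / Real.pi) 1 0 (1 / 4 + 1 / Real.pi) (by norm_num) (by positivity)
  rw [show (0 : ℝ) - (1 / 4 + 1 / Real.pi) * 1 = -(1/4) - 1 / Real.pi by ring,
    show (0 : ℝ) + (1 / 4 + 1 / Real.pi) * 1 = 1/4 + 1 / Real.pi by ring] at this
  simp only [mul_zero, sub_zero, add_zero, zero_mul] at this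
  rw [this]
  unfold VV
  have h0 := GG_zero
  have h1 := mul_le_mul_of_nonneg_left h0 (show 0 ≤ 1 / 4 + 1 / Real.pi by positivity)
  nlinarith

lemma quantErr_eq : quantErr semiP 2 = VV := by
  unfold quantErr
  refine IsLeast.csInf_eq ⟨?_, ?_⟩
  · exact ⟨_, Set.toFinite _, Set.insert_nonempty _ _, Set.ncard_insert_le _ _ |>.trans (by simp),
      err_opt.symm⟩
  · rintro v ⟨α, hfin, hne, hcard, rfl⟩
    have h1 : 0 < α.ncard := (Set.ncard_pos hfin).2 hne
    have : α.ncard = 1 ∨ α.ncard = 2 := by omega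
    rcases this with h | h
    · obtain ⟨a, rfl⟩ := Set.ncard_eq_one.1 h
      have := err_ge a a
      rwa [Set.pair_eq_singleton] at this
    · obtain ⟨a, b, -, rfl⟩ := Set.ncard_eq_two.1 h
      exact err_ge a b

/-- The set `{(-1/4 - 1/π, 1/π), (1/4 + 1/π, 1/π)}` forms the optimal set of
two-means for the mixed distribution on the boundary of the semicircular disc,
and `V₂ = 2((96 - 24π + 7π²)/(192π²) + (-96 - 8π + 17π²)/(64π²))`. -/
theorem stmt_14 :
    IsOptimalSet semiP 2
      {pt (-(1/4) - 1 / Real.pi) (1 / Real.pi), pt (1/4 + 1 / Real.pi) (1 / Real.pi)} ∧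
    quantErr semiP 2 =
      2 * ((96 - 24 * Real.pi + 7 * Real.pi ^ 2) / (192 * Real.pi ^ 2) +
        (-96 - 8 * Real.pi + 17 * Real.pi ^ 2) / (64 * Real.pi ^ 2)) := by
  refine ⟨⟨Set.toFinite _, Set.insert_nonempty _ _,
    Set.ncard_insert_le _ _ |>.trans (by simp), ?_⟩, ?_⟩
  · rw [err_opt, quantErr_eq]
  · rw [quantErr_eq]
    unfold VV
    have := Real.pi_pos
    field_simp
    ring
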